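/- Let b ∈ ℝ, c < 0, and let m1 > 0 be real. There exist constants C > 0 and δ > 0 such that for all real q with 0 < q < δ, the gap lengths of the operator with potential v(x) = b·q^{m1}·cos 2x + c·q^{2m1}·cos 4x satisfy |γ_1(q) − |b|·q^{m1}| ≤ C·q^{3m1} and |γ_2(q) − |c + b²/8|·q^{2m1}| ≤ C·q^{4m1}. -/

import Mathlib

open Real

noncomputable section

/-- `f` is a (possibly zero) solution of `-f'' + v f = λ f` that is `π`-periodic. -/
def IsPerEF (v : ℝ → ℝ) (lam : ℝ) (f : ℝ → ℝ) : Prop :=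
  ContDiff ℝ 2 f ∧ (∀ x, -(deriv (deriv f) x) + v x * f x = lam * f x) ∧
    ∀ x, f (x + Real.pi) = f x

/-- `f` is a (possibly zero) solution of `-f'' + v f = λ f` with `f(x+π) = -f(x)`. -/
def IsSemiEF (v : ℝ → ℝ) (lam : ℝ) (f : ℝ → ℝ) : Prop :=
  ContDiff ℝ 2 f ∧ (∀ x, -(deriv (deriv f) x) + v x * f x = lam * f x) ∧
    ∀ x, f (x + Real.pi) = -f x

/-- Multiplicity of `λ` as a periodic eigenvalue: the dimension of the space of
π-periodic solutions. -/
def perMult (v : ℝ → ℝ) (lam : ℝ) : ℕ :=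
  Module.finrank ℝ (Submodule.span ℝ {f : ℝ → ℝ | IsPerEF v lam f})

/-- Multiplicity of `λ` as a semi-periodic eigenvalue. -/
def semiMult (v : ℝ → ℝ) (lam : ℝ) : ℕ :=
  Module.finrank ℝ (Submodule.span ℝ {f : ℝ → ℝ | IsSemiEF v lam f})

/-- `lamP` enumerates the periodic eigenvalues of `-D² + v` in nondecreasing order
with multiplicity (indices `0, 1, 2, …`). -/
def EnumPer (v : ℝ → ℝ) (lamP : ℕ → ℝ) : Prop :=
  Monotone lamP ∧ (∀ n, ∃ f, f ≠ 0 ∧ IsPerEF v (lamP n) f) ∧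
    ∀ lam : ℝ, Nat.card {n : ℕ // lamP n = lam} = perMult v lam

/-- `lamM` enumerates the semi-periodic eigenvalues of `-D² + v` in nondecreasing order
with multiplicity (indices `1, 2, 3, …`). -/
def EnumSemi (v : ℝ → ℝ) (lamM : ℕ → ℝ) : Prop :=
  MonotoneOn lamM {n : ℕ | 1 ≤ n} ∧ (∀ n, 1 ≤ n → ∃ f, f ≠ 0 ∧ IsSemiEF v (lamM n) f) ∧
    ∀ lam : ℝ, Nat.card {n : ℕ // 1 ≤ n ∧ lamM n = lam} = semiMult v lam

/-- The length of the `n`-th instability interval: `λ_{n+1}^- - λ_n^-` for odd `n`,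
`λ_n^+ - λ_{n-1}^+` for even `n`. -/
def gapLen (lamP lamM : ℕ → ℝ) (n : ℕ) : ℝ :=
  if Odd n then lamM (n + 1) - lamM n else lamP n - lamP (n - 1)

/-- The potential acting on Fourier coefficients. -/
def WW (B D : ℝ) (a : ℤ → ℝ) (n : ℤ) : ℝ :=
  B * (a (n - 2) + a (n + 2)) + D * (a (n - 4) + a (n + 4))

theorem abs_mul_le_aux {x y p r : ℝ} (hx : |x| ≤ p) (hy : |y| ≤ r) : |x * y| ≤ p * r := by
  rw [abs_mul]
  exact mul_le_mul hx hy (abs_nonneg _) ((abs_nonneg _).trans hx)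

theorem WW_bound {B D K : ℝ} {a : ℤ → ℝ} (h : ∀ n, |a n| ≤ K) (n : ℤ) :
    |WW B D a n| ≤ 2 * (|B| + |D|) * K := by
  have h1 : |a (n - 2) + a (n + 2)| ≤ K + K := (abs_add_le _ _).trans (add_le_add (h _) (h _))
  have h2 : |a (n - 4) + a (n + 4)| ≤ K + K := (abs_add_le _ _).trans (add_le_add (h _) (h _))
  have h3 := abs_mul_le_aux (le_refl |B|) h1
  have h4 := abs_mul_le_aux (le_refl |D|) h2
  have := abs_add_le (B * (a (n - 2) + a (n + 2))) (D * (a (n - 4) + a (n + 4)))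
  unfold WW
  linarith

theorem WW_sub (B D : ℝ) (a a' : ℤ → ℝ) (n : ℤ) :
    WW B D a n - WW B D a' n = WW B D (fun k => a k - a' k) n := by
  unfold WW; ring

theorem sup_aux {a : ℤ → ℝ} {r : ℝ} (hr : 0 ≤ r) (hb : ∃ K, ∀ n, |a n| ≤ K)
    (h : ∀ K, (∀ n, |a n| ≤ K) → ∀ n, |a n| ≤ max r (K / 2)) : ∀ n, |a n| ≤ r := by
  obtain ⟨K, hK⟩ := hb
  have hbdd : BddAbove (Set.range fun n => |a n|) := ⟨K, by rintro _ ⟨n, rfl⟩; exact hK n⟩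
  have h1 : ∀ n, |a n| ≤ ⨆ n, |a n| := fun n => le_ciSup hbdd n
  have h2 := h _ h1
  have h3 : (⨆ n, |a n|) ≤ max r ((⨆ n, |a n|) / 2) := ciSup_le h2
  have h4 : (⨆ n, |a n|) ≤ r := by
    rcases le_max_iff.1 h3 with h | h
    · exact h
    · linarith
  exact fun n => (h1 n).trans h4

/-- Normalised solution of the recurrence. -/
structure Sol (B D lam σ : ℝ) (j : ℤ) (a : ℤ → ℝ) : Prop where
  bdd : ∀ n, |a n| ≤ 1
  one : a j = 1
  sym : ∀ n, a (-n) = σ * a n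
  rc : ∀ n : ℤ, ((n : ℝ) ^ 2 - lam) * a n + WW B D a n = 0
  par : ∀ n, Odd (n - j) → a n = 0

theorem Sol.lam_eq {B D lam σ : ℝ} {j : ℤ} {a : ℤ → ℝ} (h : Sol B D lam σ j a) :
    lam = (j : ℝ) ^ 2 + WW B D a j := by
  have := h.rc j
  rw [h.one] at this
  linarith

theorem Sol.lam_close {B D lam σ : ℝ} {j : ℤ} {a : ℤ → ℝ} (h : Sol B D lam σ j a) :
    |lam - (j : ℝ) ^ 2| ≤ 2 * (|B| + |D|) := by
  have h1 := WW_bound (B := B) (D := D) h.bdd j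
  rw [h.lam_eq]
  simpa using h1

theorem sq_gap {n j : ℤ} (h1 : n ≠ j) (h2 : n ≠ -j) : (1 : ℝ) ≤ |(n : ℝ) ^ 2 - (j : ℝ) ^ 2| := by
  have h : n ^ 2 - j ^ 2 ≠ 0 := by
    intro h
    have : (n - j) * (n + j) = 0 := by linear_combination h
    rcases mul_eq_zero.1 this with h | h
    · exact h1 (by linarith)
    · exact h2 (by linarith)
  have := Int.one_le_abs h
  exact_mod_cast this

theorem div_bound {g x y : ℝ} (hg : 1 ≤ |g|) (h : |g * x| ≤ y) : |x| ≤ y := by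
  rw [abs_mul] at h
  nlinarith [abs_nonneg x]

theorem Sol.unique {B D lam lam' σ : ℝ} {j : ℤ} {a a' : ℤ → ℝ} (hBD : |B| + |D| ≤ 1 / 12)
    (h : Sol B D lam σ j a) (h' : Sol B D lam' σ j a') : lam = lam' ∧ a = a' := by
  have key : ∀ n, |a n - a' n| ≤ 0 := by
    apply sup_aux le_rfl
    · exact ⟨1 + 1, fun n => (abs_sub _ _).trans (add_le_add (h.bdd n) (h'.bdd n))⟩
    · intro K hK n
      have hK0 : 0 ≤ K := (abs_nonneg _).trans (hK 0)
      by_cases h1 : n = j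
      · subst h1; rw [h.one, h'.one]; simp
      by_cases h2 : n = -j
      · subst h2; rw [h.sym, h'.sym, h.one, h'.one]; simp
      refine le_trans ?_ (le_max_right _ _)
      apply div_bound (sq_gap h1 h2)
      have e : ((n : ℝ) ^ 2 - (j : ℝ) ^ 2) * (a n - a' n) =
          WW B D (fun k => a k - a' k) j * a n + WW B D a' j * (a n - a' n)
            - WW B D (fun k => a k - a' k) n := by
        have e1 := h.rc n
        have e2 := h'.rc n
        rw [h.lam_eq] at e1
        rw [h'.lam_eq] at e2
        rw [← WW_sub, ← WW_sub]
        linear_combination e1 - e2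
      rw [e]
      have b1 := abs_mul_le_aux (WW_bound (B := B) (D := D) hK j) (h.bdd n)
      have b2 := abs_mul_le_aux (WW_bound (B := B) (D := D) h'.bdd j) (hK n)
      have b3 := WW_bound (B := B) (D := D) hK n
      have b4 := abs_sub (WW B D (fun k => a k - a' k) j * a n + WW B D a' j * (a n - a' n))
        (WW B D (fun k => a k - a' k) n)
      have b5 := abs_add_le (WW B D (fun k => a k - a' k) j * a n) (WW B D a' j * (a n - a' n))
      nlinarith
  have hfun : a = a' := by
    funext n
    have := abs_nonpos_iff.1 (key n)
    linarith
  refine ⟨?_, hfun⟩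
  rw [h.lam_eq, h'.lam_eq, hfun]

/-- The contraction. -/
def TT (B D σ : ℝ) (j : ℤ) (a : ℤ → ℝ) (n : ℤ) : ℝ :=
  if n = j then 1 else if n = -j then σ else
    (WW B D a j * a n - WW B D a n) / ((n : ℝ) ^ 2 - (j : ℝ) ^ 2)

def aa (B D σ : ℝ) (j : ℤ) : ℕ → ℤ → ℝ
  | 0 => fun n => if n = j then 1 else if n = -j then σ else 0
  | (m + 1) => TT B D σ j (aa B D σ j m)

theorem div_bound' {g x y : ℝ} (hg : 1 ≤ |g|) (h : |x| ≤ y) : |x / g| ≤ y := by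
  rw [abs_div]
  exact (div_le_self (abs_nonneg _) hg).trans h

theorem WW_sym {B D σ : ℝ} {a : ℤ → ℝ} (h : ∀ n, a (-n) = σ * a n) (n : ℤ) :
    WW B D a (-n) = σ * WW B D a n := by
  unfold WW
  rw [show -n - 2 = -(n + 2) by ring, show -n + 2 = -(n - 2) by ring,
    show -n - 4 = -(n + 4) by ring, show -n + 4 = -(n - 4) by ring, h, h, h, h]
  ring

theorem aa_inv {B D σ : ℝ} {j : ℤ} (hBD : |B| + |D| ≤ 1 / 12) (hσ : σ = 1 ∨ σ = -1)
    (hj : j = 0 → σ = 1) (m : ℕ) :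
    (∀ n, |aa B D σ j m n| ≤ 1) ∧ (∀ n, aa B D σ j m (-n) = σ * aa B D σ j m n) ∧
    (∀ n, Odd (n - j) → aa B D σ j m n = 0) := by
  have hσ2 : σ * σ = 1 := by rcases hσ with h | h <;> rw [h] <;> norm_num
  have hσa : |σ| ≤ 1 := by rcases hσ with h | h <;> rw [h] <;> norm_num
  have hpar : ∀ n, Odd (n - j) → n ≠ j ∧ n ≠ -j := by
    rintro n ⟨k, hk⟩
    constructor <;> intro h <;> omega
  induction m with
  | zero =>
    refine ⟨fun n => ?_, fun n => ?_, fun n hn => ?_⟩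
    · simp only [aa]
      split_ifs <;> simp [hσa]
    · simp only [aa]
      by_cases h1 : n = j
      · subst h1
        by_cases h0 : n = 0
        · subst h0; simp [hj rfl]
        · have : ¬ (-n = n) := by omega
          simp [this]
      · by_cases h2 : n = -j
        · subst h2
          simp [h1, hσ2]
        · have e1 : ¬ (-n = j) := by omega
          have e2 : ¬ (-n = -j) := by omega
          simp [h1, h2, e1]
    · simp only [aa]
      rw [if_neg (hpar n hn).1, if_neg (hpar n hn).2]
  | succ m ih =>
    obtain ⟨i1, i2, i3⟩ := ih
    refine ⟨fun n => ?_, fun n => ?_, fun n hn => ?_⟩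
    · simp only [aa, TT]
      split_ifs with h1 h2
      · simp
      · exact hσa
      · apply div_bound' (sq_gap h1 h2)
        have b1 := abs_mul_le_aux (WW_bound (B := B) (D := D) i1 j) (i1 n)
        have b2 := WW_bound (B := B) (D := D) i1 n
        have := abs_sub (WW B D (aa B D σ j m) j * aa B D σ j m n) (WW B D (aa B D σ j m) n)
        linarith
    · simp only [aa, TT]
      by_cases h1 : n = j
      · subst h1
        by_cases h0 : n = 0
        · subst h0; simp [hj rfl]
        · have : ¬ (-n = n) := by omega
          simp [this]
      · by_cases h2 : n = -j
        · subst h2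
          simp [h1, hσ2]
        · have e1 : ¬ (-n = j) := by omega
          have e2 : ¬ (-n = -j) := by omega
          rw [if_neg e1, if_neg e2, if_neg h1, if_neg h2, i2, WW_sym i2]
          push_cast
          ring
    · simp only [aa, TT]
      rw [if_neg (hpar n hn).1, if_neg (hpar n hn).2]
      have o : ∀ k : ℤ, Even k → aa B D σ j m (n + k) = 0 := fun k hk => i3 _ (by
        have := hn.add_even hk
        rwa [show n - j + k = n + k - j by ring] at this)
      have o1 := o (-2) (by decide)
      have o2 := o (2) (by decide)
      have o3 := o (-4) (by decide)
      have o4 := o (4) (by decide)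
      rw [i3 n hn]
      simp only [WW, sub_eq_add_neg, o1, o2, o3, o4]
      simp

theorem aa_diff {B D σ : ℝ} {j : ℤ} (hBD : |B| + |D| ≤ 1 / 12) (hσ : σ = 1 ∨ σ = -1)
    (hj : j = 0 → σ = 1) (m : ℕ) :
    ∀ n, |aa B D σ j m n - aa B D σ j (m + 1) n| ≤ 1 * (1 / 2) ^ m := by
  induction m with
  | zero =>
    intro n
    simp only [aa, TT]
    split_ifs with h1 h2
    · simp
    · simp
    · rw [zero_sub, abs_neg]
      have i1 := (aa_inv (B := B) (D := D) hBD hσ hj 0).1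
      have b2 := WW_bound (B := B) (D := D) i1 n
      have b1 := abs_mul_le_aux (WW_bound (B := B) (D := D) i1 j) (i1 n)
      have := abs_sub (WW B D (aa B D σ j 0) j * aa B D σ j 0 n) (WW B D (aa B D σ j 0) n)
      simp only [pow_zero, mul_one]
      apply div_bound' (sq_gap h1 h2)
      simp only [aa, h1, h2, if_false] at this b1 b2
      simp only [mul_zero] at *
      linarith
  | succ m ih =>
    intro n
    have i1 := (aa_inv (B := B) (D := D) hBD hσ hj m).1
    have i2 := (aa_inv (B := B) (D := D) hBD hσ hj (m + 1)).1
    change |TT B D σ j (aa B D σ j m) n - TT B D σ j (aa B D σ j (m + 1)) n| ≤ _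
    set a := aa B D σ j m
    set a' := aa B D σ j (m + 1)
    unfold TT
    have hp : (0:ℝ) ≤ (1 / 2) ^ m := by positivity
    have hps : (1 / 2 : ℝ) ^ (m + 1) = (1 / 2) ^ m / 2 := by ring
    split_ifs with h1 h2
    · simp
    · simp
    · rw [← sub_div]
      apply div_bound' (sq_gap h1 h2)
      have e : WW B D a j * a n - WW B D a n - (WW B D a' j * a' n - WW B D a' n) =
          WW B D (fun k => a k - a' k) j * a n + WW B D a' j * (a n - a' n)
            - WW B D (fun k => a k - a' k) n := by
        rw [← WW_sub, ← WW_sub]; ring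
      rw [e]
      have b1 := abs_mul_le_aux (WW_bound (B := B) (D := D) ih j) (i1 n)
      have b2 := abs_mul_le_aux (WW_bound (B := B) (D := D) i2 j) (ih n)
      have b3 := WW_bound (B := B) (D := D) ih n
      have b4 := abs_sub (WW B D (fun k => a k - a' k) j * a n + WW B D a' j * (a n - a' n))
        (WW B D (fun k => a k - a' k) n)
      have b5 := abs_add_le (WW B D (fun k => a k - a' k) j * a n) (WW B D a' j * (a n - a' n))
      rw [hps]
      nlinarith

theorem Sol.exist {B D σ : ℝ} {j : ℤ} (hBD : |B| + |D| ≤ 1 / 12) (hσ : σ = 1 ∨ σ = -1)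
    (hj : j = 0 → σ = 1) : ∃ lam a, Sol B D lam σ j a := by
  have hlim : ∀ n, ∃ x, Filter.Tendsto (fun m => aa B D σ j m n) Filter.atTop (nhds x) := by
    intro n
    apply cauchySeq_tendsto_of_complete
    apply cauchySeq_of_le_geometric (1 / 2) 1 (by norm_num)
    intro m
    rw [Real.dist_eq]
    exact aa_diff hBD hσ hj m n
  choose a ha using hlim
  have hinv := fun m => aa_inv (B := B) (D := D) (σ := σ) (j := j) hBD hσ hj m
  have hW : ∀ n, Filter.Tendsto (fun m => WW B D (aa B D σ j m) n) Filter.atTop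
      (nhds (WW B D a n)) := by
    intro n
    unfold WW
    exact (((ha _).add (ha _)).const_mul _).add (((ha _).add (ha _)).const_mul _)
  have hfix : ∀ n, a n = TT B D σ j a n := by
    intro n
    have h1 : Filter.Tendsto (fun m => aa B D σ j (m + 1) n) Filter.atTop (nhds (a n)) :=
      (ha n).comp (Filter.tendsto_add_atTop_nat 1)
    refine tendsto_nhds_unique h1 ?_
    simp only [aa, TT]
    split_ifs with h1 h2
    · exact tendsto_const_nhds
    · exact tendsto_const_nhds
    · exact (((hW _).mul (ha _)).sub (hW _)).div_const _
  have hone : a j = 1 := by rw [hfix]; simp [TT]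
  have hsym : ∀ n, a (-n) = σ * a n := by
    intro n
    refine tendsto_nhds_unique (ha (-n)) ?_
    simp only [(hinv _).2.1 n]
    exact (ha n).const_mul _
  refine ⟨(j : ℝ) ^ 2 + WW B D a j, a, ?_, hone, hsym, ?_, ?_⟩
  · intro n
    exact le_of_tendsto (ha n).abs (Filter.Eventually.of_forall fun m => (hinv m).1 n)
  · intro n
    by_cases h1 : n = j
    · subst h1; rw [hone]; ring
    by_cases h2 : n = -j
    · subst h2; rw [hsym, hone, WW_sym hsym]; push_cast; ring
    have h3 := hfix n
    simp only [TT, if_neg h1, if_neg h2] at h3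
    have h4 : ((n : ℝ) ^ 2 - (j : ℝ) ^ 2) ≠ 0 := by
      intro h
      have := sq_gap h1 h2
      rw [h] at this
      norm_num at this
    rw [eq_div_iff h4] at h3
    linear_combination h3
  · intro n hn
    refine tendsto_nhds_unique (ha n) ?_
    simp only [(hinv _).2.2 n hn]
    exact tendsto_const_nhds

/-- Raw bounded solutions of the recurrence with `lam` away from the other unperturbed levels. -/
structure Raw (B D lam σ : ℝ) (j : ℤ) (a : ℤ → ℝ) : Prop where
  bdd : ∃ K, ∀ n, |a n| ≤ K
  sym : ∀ n, a (-n) = σ * a n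
  rc : ∀ n : ℤ, ((n : ℝ) ^ 2 - lam) * a n + WW B D a n = 0
  par : ∀ n, Odd (n - j) → a n = 0
  gap : ∀ n, Even (n - j) → n ≠ j → n ≠ -j → 1 ≤ |(n : ℝ) ^ 2 - lam|

theorem Raw.le {B D lam σ : ℝ} {j : ℤ} {a : ℤ → ℝ} (hBD : |B| + |D| ≤ 1 / 12)
    (hσ : σ = 1 ∨ σ = -1) (h : Raw B D lam σ j a) : ∀ n, |a n| ≤ |a j| := by
  have hσa : |σ| = 1 := by rcases hσ with h | h <;> rw [h] <;> norm_num
  refine sup_aux (abs_nonneg _) h.bdd ?_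
  intro K hK n
  have hK0 : 0 ≤ K := (abs_nonneg _).trans (hK 0)
  by_cases h1 : n = j
  · subst h1; exact le_max_left _ _
  by_cases h2 : n = -j
  · subst h2; rw [h.sym, abs_mul, hσa, one_mul]; exact le_max_left _ _
  rcases Int.even_or_odd (n - j) with h3 | h3
  · refine le_trans ?_ (le_max_right _ _)
    apply div_bound (h.gap n h3 h1 h2)
    have := h.rc n
    rw [show ((n : ℝ) ^ 2 - lam) * a n = - WW B D a n by linarith, abs_neg]
    have := WW_bound (B := B) (D := D) hK n
    nlinarith
  · rw [h.par n h3, abs_zero]; exact le_max_of_le_left (abs_nonneg _)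

theorem Raw.zero {B D lam σ : ℝ} {j : ℤ} {a : ℤ → ℝ} (hBD : |B| + |D| ≤ 1 / 12)
    (hσ : σ = 1 ∨ σ = -1) (h : Raw B D lam σ j a) (h0 : a j = 0) : ∀ n, a n = 0 := by
  intro n
  have := h.le hBD hσ n
  rw [h0, abs_zero] at this
  exact abs_nonpos_iff.1 this

theorem Raw.sol {B D lam σ : ℝ} {j : ℤ} {a : ℤ → ℝ} (hBD : |B| + |D| ≤ 1 / 12)
    (hσ : σ = 1 ∨ σ = -1) (h : Raw B D lam σ j a) (h0 : a j ≠ 0) :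
    Sol B D lam σ j (fun n => a n / a j) := by
  refine ⟨fun n => ?_, div_self h0, fun n => ?_, fun n => ?_, fun n hn => ?_⟩
  · rw [abs_div, div_le_one (abs_pos.2 h0)]; exact h.le hBD hσ n
  · simp only [h.sym]; ring
  · have := h.rc n
    have e : ((n : ℝ) ^ 2 - lam) * (a n / a j) + WW B D (fun n => a n / a j) n =
      (((n : ℝ) ^ 2 - lam) * a n + WW B D a n) / a j := by unfold WW; ring
    rw [e, this, zero_div]
  · simp only [h.par n hn, zero_div]

theorem Sol.small {B D lam σ t : ℝ} {j : ℤ} {a : ℤ → ℝ} (hB : |B| ≤ t) (hD : |D| ≤ t ^ 2)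
    (ht : t ≤ 1 / 24) (h : Sol B D lam σ j a) {n : ℤ} (h1 : n ≠ j) (h2 : n ≠ -j) :
    |a n| ≤ 3 * t := by
  have ht0 : 0 ≤ t := (abs_nonneg _).trans hB
  have hg := sq_gap h1 h2
  have hl := h.lam_close
  have hw := WW_bound (B := B) (D := D) h.bdd n
  have hM : 2 * (|B| + |D|) ≤ 2.1 * t := by nlinarith
  have hg2 : 0.9 ≤ |(n : ℝ) ^ 2 - lam| := by
    have := abs_sub_abs_le_abs_sub ((n : ℝ) ^ 2 - (j : ℝ) ^ 2) (lam - (j : ℝ) ^ 2)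
    rw [show ((n : ℝ) ^ 2 - (j : ℝ) ^ 2) - (lam - (j : ℝ) ^ 2) = (n : ℝ) ^ 2 - lam by ring] at this
    linarith
  have e : |((n : ℝ) ^ 2 - lam) * a n| = |WW B D a n| := by
    rw [show ((n : ℝ) ^ 2 - lam) * a n = - WW B D a n by linarith [h.rc n], abs_neg]
  rw [abs_mul] at e
  have : 0.9 * |a n| ≤ |(n : ℝ) ^ 2 - lam| * |a n| :=
    mul_le_mul_of_nonneg_right hg2 (abs_nonneg _)
  linarith

theorem Sol.asymp1 {B D lam σ t : ℝ} {a : ℤ → ℝ} (hσ : σ = 1 ∨ σ = -1)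
    (hB : |B| ≤ t) (hD : |D| ≤ t ^ 2)
    (ht : t ≤ 1 / 24) (h : Sol B D lam σ 1 a) : |lam - 1 - σ * B + B ^ 2 / 8| ≤ 5 * t ^ 3 := by
  have ht0 : 0 ≤ t := (abs_nonneg _).trans hB
  have hσa : |σ| ≤ 1 := by rcases hσ with h | h <;> rw [h] <;> norm_num
  have hl := h.lam_close
  have hM : 2 * (|B| + |D|) ≤ 2.1 * t := by nlinarith
  have s3 := h.small hB hD ht (n := 3) (by norm_num) (by norm_num)
  have s5 := h.small hB hD ht (n := 5) (by norm_num) (by norm_num)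
  have s7 := h.small hB hD ht (n := 7) (by norm_num) (by norm_num)
  have s9 := h.bdd 9
  have m1 : a (-1) = σ := by rw [h.sym, h.one, mul_one]
  have m3 : a (-3) = σ * a 3 := h.sym 3
  have r1 := h.rc 1
  have r3 := h.rc 3
  have r5 := h.rc 5
  simp only [WW] at r1 r3 r5
  norm_num [h.one, m1, m3] at r1 r3 r5
  norm_num at hl
  obtain ⟨μ, rfl⟩ : ∃ μ, lam = 1 + μ := ⟨lam - 1, by ring⟩
  have hμ : |μ| ≤ 2.1 * t := by
    have : |1 + μ - 1| = |μ| := by congr 1; ring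
    linarith
  have t2 : 0 ≤ t ^ 2 := by positivity
  have t3 : t ^ 3 ≤ t ^ 2 / 24 := by nlinarith
  have t4 : t ^ 4 ≤ t ^ 3 / 24 := by nlinarith [pow_nonneg ht0 3]
  -- a 5
  have a5 : |a 5| ≤ t ^ 2 := by
    have p1 := abs_le.1 (abs_mul_le_aux hB s3)
    have p2 := abs_le.1 (abs_mul_le_aux hB s7)
    have p3 := abs_le.1 (abs_mul_le_aux hD s9)
    have p4 := abs_le.1 (abs_mul_le_aux hμ s5)
    have p5 := abs_le.1 hD
    rw [abs_le]
    constructor <;> linarith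
  have a3 : |8 * a 3 + B| ≤ 9 * t ^ 2 := by
    have p1 := abs_le.1 (abs_mul_le_aux hμ s3)
    have p2 := abs_le.1 (abs_mul_le_aux hB a5)
    have p3 := abs_le.1 (abs_mul_le_aux hD hσa)
    have p4 := abs_le.1 (abs_mul_le_aux hD s7)
    rw [abs_le]
    constructor <;> linarith
  have p1 := abs_le.1 (abs_mul_le_aux hB a3)
  have p2 := abs_le.1 (abs_mul_le_aux (abs_mul_le_aux hD hσa) s3)
  have p3 := abs_le.1 (abs_mul_le_aux hD a5)
  have e : 1 + μ - 1 - σ * B + B ^ 2 / 8 = B * (8 * a 3 + B) / 8 + D * σ * a 3 + D * a 5 := by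
    linear_combination -r1
  rw [e, abs_le]
  constructor <;> linarith

theorem Sol.asymp2 {B D lam σ t : ℝ} {a : ℤ → ℝ} (hσ : σ = 1 ∨ σ = -1)
    (hB : |B| ≤ t) (hD : |D| ≤ t ^ 2)
    (ht : t ≤ 1 / 24) (h : Sol B D lam σ 2 a) :
    |lam - 4 - B ^ 2 * (1 + σ) / 4 + B ^ 2 / 12 - σ * D| ≤ 12 * t ^ 4 := by
  have ht0 : 0 ≤ t := (abs_nonneg _).trans hB
  have hσa : |σ| ≤ 1 := by rcases hσ with h | h <;> rw [h] <;> norm_num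
  have hσb : |1 + σ| ≤ 2 := by rcases hσ with h | h <;> rw [h] <;> norm_num
  have s0 := h.small hB hD ht (n := 0) (by norm_num) (by norm_num)
  have s4 := h.small hB hD ht (n := 4) (by norm_num) (by norm_num)
  have s6 := h.small hB hD ht (n := 6) (by norm_num) (by norm_num)
  have s8 := h.small hB hD ht (n := 8) (by norm_num) (by norm_num)
  have s10 := h.bdd 10
  have m1 : a (-2) = σ := by rw [h.sym, h.one, mul_one]
  have m3 : a (-4) = σ * a 4 := h.sym 4
  have r0 := h.rc 0
  have r2 := h.rc 2
  have r4 := h.rc 4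
  have r6 := h.rc 6
  simp only [WW] at r0 r2 r4 r6
  norm_num [h.one, m1, m3] at r0 r2 r4 r6
  obtain ⟨μ, rfl⟩ : ∃ μ, lam = 4 + μ := ⟨lam - 4, by ring⟩
  have t2 : 0 ≤ t ^ 2 := by positivity
  have t3 : t ^ 3 ≤ t ^ 2 / 24 := by nlinarith
  have t30 : 0 ≤ t ^ 3 := by positivity
  have t40 : 0 ≤ t ^ 4 := by positivity
  have t4 : t ^ 4 ≤ t ^ 3 / 24 := by nlinarith
  have hμ : |μ| ≤ 8 * t ^ 2 := by
    have p1 := abs_le.1 (abs_mul_le_aux hB s0)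
    have p2 := abs_le.1 (abs_mul_le_aux hB s4)
    have p3 := abs_le.1 (abs_mul_le_aux hD hσa)
    have p4 := abs_le.1 (abs_mul_le_aux hD s6)
    rw [abs_le]
    constructor <;> linarith
  have a6 : |a 6| ≤ t ^ 2 := by
    have p1 := abs_le.1 (abs_mul_le_aux hB s4)
    have p2 := abs_le.1 (abs_mul_le_aux hB s8)
    have p3 := abs_le.1 (abs_mul_le_aux hD s10)
    have p4 := abs_le.1 (abs_mul_le_aux hμ s6)
    have p5 := abs_le.1 hD
    rw [abs_le]
    constructor <;> linarith
  have a4 : |12 * a 4 + B| ≤ 31 * t ^ 3 := by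
    have p1 := abs_le.1 (abs_mul_le_aux hμ s4)
    have p2 := abs_le.1 (abs_mul_le_aux hB a6)
    have p3 := abs_le.1 (abs_mul_le_aux hD s0)
    have p4 := abs_le.1 (abs_mul_le_aux hD s8)
    rw [abs_le]
    constructor <;> linarith
  have a0 : |4 * a 0 - B * (1 + σ)| ≤ 30 * t ^ 3 := by
    have p1 := abs_le.1 (abs_mul_le_aux hμ s0)
    have p2 := abs_le.1 (abs_mul_le_aux (abs_mul_le_aux hD s4) hσb)
    rw [abs_le]
    constructor <;> linarith
  have p1 := abs_le.1 (abs_mul_le_aux hB a4)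
  have p2 := abs_le.1 (abs_mul_le_aux hB a0)
  have p3 := abs_le.1 (abs_mul_le_aux hD a6)
  have e : 4 + μ - 4 - B ^ 2 * (1 + σ) / 4 + B ^ 2 / 12 - σ * D =
      B * (12 * a 4 + B) / 12 + B * (4 * a 0 - B * (1 + σ)) / 4 + D * a 6 := by
    linear_combination -r2
  rw [e, abs_le]
  constructor <;> linarith

/-- The potential. -/
def vv (B D x : ℝ) : ℝ := 2 * B * Real.cos (2 * x) + 2 * D * Real.cos (4 * x)

/-- Eigenfunctions with multiplier `s`. -/
structure EF (B D s lam : ℝ) (f : ℝ → ℝ) : Prop where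
  smooth : ContDiff ℝ 2 f
  ode : ∀ x, -(deriv (deriv f) x) + vv B D x * f x = lam * f x
  per : ∀ x, f (x + Real.pi) = s * f x

/-- Fourier coefficients with a phase. -/
def fc (φ : ℝ) (f : ℝ → ℝ) (n : ℤ) : ℝ :=
  ∫ x in (0:ℝ)..(2 * Real.pi), f x * Real.cos (n * x - φ)

theorem vv_cos (B D φ x : ℝ) (n : ℤ) : vv B D x * Real.cos (n * x - φ) =
    B * (Real.cos (((n - 2 : ℤ) : ℝ) * x - φ) + Real.cos (((n + 2 : ℤ) : ℝ) * x - φ)) +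
    D * (Real.cos (((n - 4 : ℤ) : ℝ) * x - φ) + Real.cos (((n + 4 : ℤ) : ℝ) * x - φ)) := by
  have e1 : ((n - 2 : ℤ) : ℝ) * x - φ = (n * x - φ) - 2 * x := by push_cast; ring
  have e2 : ((n + 2 : ℤ) : ℝ) * x - φ = (n * x - φ) + 2 * x := by push_cast; ring
  have e3 : ((n - 4 : ℤ) : ℝ) * x - φ = (n * x - φ) - 4 * x := by push_cast; ring
  have e4 : ((n + 4 : ℤ) : ℝ) * x - φ = (n * x - φ) + 4 * x := by push_cast; ring
  rw [e1, e2, e3, e4, Real.cos_sub _ (2 * x), Real.cos_add _ (2 * x), Real.cos_sub _ (4 * x),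
    Real.cos_add _ (4 * x)]
  unfold vv
  ring

theorem contDiff_two_aux {f : ℝ → ℝ} : ContDiff ℝ 2 f ↔
    Differentiable ℝ f ∧ Differentiable ℝ (deriv f) ∧ Continuous (deriv (deriv f)) := by
  rw [show (2 : WithTop ℕ∞) = 1 + 1 by norm_num, contDiff_succ_iff_deriv, contDiff_one_iff_deriv]
  simp

theorem fc_intble {f : ℝ → ℝ} (hf : Continuous f) (φ : ℝ) (n : ℤ) (a b : ℝ) :
    IntervalIntegrable (fun x => f x * Real.cos (n * x - φ)) MeasureTheory.volume a b := by
  apply Continuous.intervalIntegrable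
  fun_prop

theorem EF.per2 {B D s lam : ℝ} {f : ℝ → ℝ} (hs : s * s = 1) (h : EF B D s lam f) (x : ℝ) :
    f (x + 2 * Real.pi) = f x := by
  rw [show x + 2 * Real.pi = x + Real.pi + Real.pi by ring, h.per, h.per, ← mul_assoc, hs, one_mul]

theorem EF.rc {B D s lam : ℝ} {f : ℝ → ℝ} (hs : s * s = 1) (h : EF B D s lam f) (φ : ℝ) (n : ℤ) :
    ((n : ℝ) ^ 2 - lam) * fc φ f n + WW B D (fc φ f) n = 0 := by
  obtain ⟨d1, d2, c2⟩ := contDiff_two_aux.1 h.smooth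
  have c0 := d1.continuous
  have hper := h.per2 hs
  have hper' : ∀ x, deriv f (x + 2 * Real.pi) = deriv f x := by
    intro x
    rw [← deriv_comp_add_const]
    congr 1
    funext y
    exact hper y
  have hder : ∀ x, HasDerivAt (fun x => deriv f x * Real.cos (n * x - φ) +
      n * f x * Real.sin (n * x - φ))
      ((deriv (deriv f) x + n ^ 2 * f x) * Real.cos (n * x - φ)) x := by
    intro x
    have l : HasDerivAt (fun x : ℝ => n * x - φ) (n : ℝ) x := by
      simpa using ((hasDerivAt_id x).const_mul (n : ℝ)).sub_const φ
    have h1 := (d2 x).hasDerivAt.mul l.cos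
    have h2 := (((d1 x).hasDerivAt).const_mul (n : ℝ)).mul l.sin
    refine (h1.add h2).congr_deriv ?_
    ring
  have hintg : ∫ x in (0:ℝ)..(2 * Real.pi), (deriv (deriv f) x + n ^ 2 * f x) *
      Real.cos (n * x - φ) = 0 := by
    rw [intervalIntegral.integral_eq_sub_of_hasDerivAt (fun x _ => hder x)
      (Continuous.intervalIntegrable (by fun_prop) _ _)]
    have e1 := hper 0
    have e2 := hper' 0
    rw [zero_add] at e1 e2
    have e3 : (n : ℝ) * (2 * Real.pi) - φ = (n * 0 - φ) + n * (2 * Real.pi) := by ring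
    rw [e1, e2, e3, Real.cos_add_int_mul_two_pi, Real.sin_add_int_mul_two_pi]
    ring
  have hI := fun k => fc_intble c0 φ k 0 (2 * Real.pi)
  have e : ∀ x, (deriv (deriv f) x + n ^ 2 * f x) * Real.cos (n * x - φ) =
      ((n : ℝ) ^ 2 - lam) * (f x * Real.cos (n * x - φ)) +
      (B * (f x * Real.cos (((n - 2 : ℤ) : ℝ) * x - φ) +
        f x * Real.cos (((n + 2 : ℤ) : ℝ) * x - φ)) +
      D * (f x * Real.cos (((n - 4 : ℤ) : ℝ) * x - φ) +
        f x * Real.cos (((n + 4 : ℤ) : ℝ) * x - φ))) := by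
    intro x
    have h1 := h.ode x
    have h2 := vv_cos B D φ x n
    linear_combination (-Real.cos (n * x - φ)) * h1 + f x * h2
  simp_rw [e] at hintg
  rw [intervalIntegral.integral_add ((hI _).const_mul _)
      ((((hI _).add (hI _)).const_mul _).add (((hI _).add (hI _)).const_mul _)),
    intervalIntegral.integral_add (((hI _).add (hI _)).const_mul _)
      (((hI _).add (hI _)).const_mul _)] at hintg
  rw [intervalIntegral.integral_const_mul, intervalIntegral.integral_const_mul,
    intervalIntegral.integral_const_mul, intervalIntegral.integral_add (hI _) (hI _),
    intervalIntegral.integral_add (hI _) (hI _)] at hintg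
  exact hintg

theorem fc_bdd {f : ℝ → ℝ} (hf : Continuous f) (φ : ℝ) : ∃ K, ∀ n, |fc φ f n| ≤ K := by
  obtain ⟨C, hC⟩ := (isCompact_uIcc (a := (0:ℝ)) (b := 2 * Real.pi)).exists_bound_of_continuousOn
    hf.continuousOn
  refine ⟨C * |2 * Real.pi - 0|, fun n => ?_⟩
  unfold fc
  rw [← Real.norm_eq_abs]
  apply intervalIntegral.norm_integral_le_of_norm_le_const
  intro x hx
  have h1 := hC x (Set.uIoc_subset_uIcc hx)
  rw [norm_mul]
  have h2 : ‖Real.cos (n * x - φ)‖ ≤ 1 := Real.abs_cos_le_one _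
  nlinarith [norm_nonneg (f x), norm_nonneg (Real.cos (n * x - φ))]

theorem EF.fpar {B D s lam : ℝ} {f : ℝ → ℝ} (h : EF B D s lam f) (φ : ℝ) (n : ℤ)
    (hn : s * (-1) ^ n = -1) : fc φ f n = 0 := by
  have c0 := h.smooth.continuous
  unfold fc
  rw [← intervalIntegral.integral_add_adjacent_intervals (fc_intble c0 φ n 0 Real.pi)
    (fc_intble c0 φ n Real.pi (2 * Real.pi))]
  have := intervalIntegral.integral_comp_add_right (a := 0) (b := Real.pi)
    (fun x => f x * Real.cos (n * x - φ)) Real.pi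
  rw [zero_add, show Real.pi + Real.pi = 2 * Real.pi by ring] at this
  rw [← this]
  have e : ∀ x, f (x + Real.pi) * Real.cos (n * (x + Real.pi) - φ) =
      - (f x * Real.cos (n * x - φ)) := by
    intro x
    rw [h.per, show (n : ℝ) * (x + Real.pi) - φ = (n * x - φ) + n * Real.pi by ring,
      Real.cos_add_int_mul_pi]
    linear_combination (f x * Real.cos (n * x - φ)) * hn
  simp_rw [e]
  rw [intervalIntegral.integral_neg]
  ring

/-- Admissible phase/sign pairs. -/
def Ph (φ σ : ℝ) : Prop := (φ = 0 ∧ σ = 1) ∨ (φ = Real.pi / 2 ∧ σ = -1)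

theorem Ph.cos_neg {φ σ : ℝ} (h : Ph φ σ) (y : ℝ) : Real.cos (-y - φ) = σ * Real.cos (y - φ) := by
  rcases h with ⟨rfl, rfl⟩ | ⟨rfl, rfl⟩
  · simp
  · simp [Real.cos_sub]

theorem Ph.sgn {φ σ : ℝ} (h : Ph φ σ) : σ = 1 ∨ σ = -1 := by
  rcases h with ⟨rfl, rfl⟩ | ⟨rfl, rfl⟩ <;> simp

theorem fc_sym {φ σ : ℝ} (h : Ph φ σ) (f : ℝ → ℝ) (n : ℤ) : fc φ f (-n) = σ * fc φ f n := by
  unfold fc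
  rw [← intervalIntegral.integral_const_mul]
  congr 1
  funext x
  have := h.cos_neg (n * x)
  push_cast
  rw [show -(n : ℝ) * x - φ = -(n * x) - φ by ring, this]
  ring

theorem zpow_par {n j : ℤ} : (Even (n - j) → (-1 : ℝ) ^ n = (-1) ^ j) ∧
    (Odd (n - j) → (-1 : ℝ) ^ j * (-1) ^ n = -1) := by
  have e : (-1 : ℝ) ^ n = (-1) ^ (n - j) * (-1) ^ j := by
    rw [← zpow_add₀ (by norm_num)]; congr 1; ring
  have e2 : (-1 : ℝ) ^ j * (-1) ^ j = 1 := by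
    rw [← zpow_add₀ (by norm_num)]; exact (Even.add_self j).neg_one_zpow
  constructor
  · intro h
    rw [e, h.neg_one_zpow, one_mul]
  · intro h
    rw [e, h.neg_one_zpow]
    linear_combination -e2

theorem zpow_sq_aux (j : ℤ) : (-1 : ℝ) ^ j * (-1) ^ j = 1 := by
  rw [← zpow_add₀ (by norm_num)]; exact (Even.add_self j).neg_one_zpow

theorem EF.raw {B D lam φ σ : ℝ} {j : ℤ} {f : ℝ → ℝ} (h : EF B D ((-1) ^ j) lam f)
    (hp : Ph φ σ)
    (gap : ∀ n : ℤ, Even (n - j) → n ≠ j → n ≠ -j → 1 ≤ |(n : ℝ) ^ 2 - lam|) :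
    Raw B D lam σ j (fc φ f) where
  bdd := fc_bdd h.smooth.continuous φ
  sym := fc_sym hp f
  rc := h.rc (zpow_sq_aux j) φ
  par := fun n hn => h.fpar φ n (zpow_par.2 hn)
  gap := gap

theorem fourier_inj {f : ℝ → ℝ} (hf : Continuous f) (hp : ∀ x, f (x + 2 * Real.pi) = f x)
    (h0 : ∀ n, fc 0 f n = 0) (h1 : ∀ n, fc (Real.pi / 2) f n = 0) : f = 0 := by
  have : Fact (0 < 2 * Real.pi) := ⟨by positivity⟩
  have hper : Function.Periodic (fun x => (f x : ℂ)) (2 * Real.pi) := fun x => by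
    simp only [hp x]
  have hc : Continuous hper.lift := by
    apply continuous_coinduced_dom.2
    change Continuous (fun x => (f x : ℂ))
    fun_prop
  let g : C(AddCircle (2 * Real.pi), ℂ) := ⟨hper.lift, hc⟩
  have hz : ∀ n, fourierCoeff g n = 0 := by
    intro n
    rw [fourierCoeff_eq_intervalIntegral _ _ 0]
    have e : ∀ x : ℝ, fourier (T := 2 * Real.pi) (-n) (x : AddCircle (2 * Real.pi)) •
        g (x : AddCircle (2 * Real.pi)) =
        ((f x * Real.cos (n * x - 0) : ℝ) : ℂ) -
        ((f x * Real.cos (n * x - Real.pi / 2) : ℝ) : ℂ) * Complex.I := by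
      intro x
      rw [fourier_coe_apply]
      have e1 : g (x : AddCircle (2 * Real.pi)) = (f x : ℂ) := rfl
      have e2 : (2 * (Real.pi : ℂ) * Complex.I * ((-n : ℤ) : ℂ) * (x : ℂ) /
          ((2 * Real.pi : ℝ) : ℂ)) = ((-(n * x) : ℝ) : ℂ) * Complex.I := by
        have : (Real.pi : ℂ) ≠ 0 := by exact_mod_cast Real.pi_ne_zero
        push_cast
        field_simp
      rw [e1, e2, Complex.exp_mul_I, Real.cos_sub_pi_div_two, sub_zero, ← Complex.ofReal_cos,
        ← Complex.ofReal_sin, Real.cos_neg, Real.sin_neg]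
      simp only [smul_eq_mul]
      push_cast
      ring
    simp_rw [e]
    rw [intervalIntegral.integral_sub, intervalIntegral.integral_mul_const,
      intervalIntegral.integral_ofReal, intervalIntegral.integral_ofReal, zero_add]
    · have a0 := h0 n
      have a1 := h1 n
      unfold fc at a0 a1
      rw [a0, a1]
      simp
    · apply Continuous.intervalIntegrable
      fun_prop
    · apply Continuous.intervalIntegrable
      fun_prop
  have hs : Summable (fourierCoeff g) := by
    rw [show fourierCoeff g = fun _ => 0 from funext hz]
    exact summable_zero
  funext x
  have := has_pointwise_sum_fourier_series_of_summable hs (x : AddCircle (2 * Real.pi))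
  simp only [hz, zero_smul] at this
  have h2 : g (x : AddCircle (2 * Real.pi)) = 0 := this.unique hasSum_zero
  have h3 : (f x : ℂ) = 0 := h2
  exact_mod_cast h3

theorem cos_int (k : ℤ) (θ : ℝ) : ∫ x in (0:ℝ)..(2 * Real.pi), Real.cos (k * x - θ) =
    if k = 0 then 2 * Real.pi * Real.cos θ else 0 := by
  split_ifs with h
  · subst h; simp
  · have hk : (k : ℝ) ≠ 0 := by exact_mod_cast h
    have hd : ∀ x, HasDerivAt (fun x : ℝ => Real.sin (k * x - θ) / k) (Real.cos (k * x - θ)) x := by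
      intro x
      have l : HasDerivAt (fun x : ℝ => k * x - θ) (k : ℝ) x := by
        simpa using ((hasDerivAt_id x).const_mul (k : ℝ)).sub_const θ
      refine (l.sin.div_const (k : ℝ)).congr_deriv ?_
      field_simp
    rw [intervalIntegral.integral_eq_sub_of_hasDerivAt (fun x _ => hd x)
      (Continuous.intervalIntegrable (by fun_prop) _ _),
      show (k : ℝ) * (2 * Real.pi) - θ = (k * 0 - θ) + k * (2 * Real.pi) by ring,
      Real.sin_add_int_mul_two_pi, sub_self]

theorem cos_cos_int (n j : ℤ) (φ ψ : ℝ) :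
    ∫ x in (0:ℝ)..(2 * Real.pi), Real.cos (n * x - φ) * Real.cos (j * x - ψ) =
    (if n = j then Real.pi * Real.cos (φ - ψ) else 0) +
    (if n = -j then Real.pi * Real.cos (φ + ψ) else 0) := by
  have e : ∀ x : ℝ, Real.cos (n * x - φ) * Real.cos (j * x - ψ) =
      (1 / 2) * Real.cos (((n - j : ℤ) : ℝ) * x - (φ - ψ)) +
      (1 / 2) * Real.cos (((n + j : ℤ) : ℝ) * x - (φ + ψ)) := by
    intro x
    rw [show ((n - j : ℤ) : ℝ) * x - (φ - ψ) = (n * x - φ) - (j * x - ψ) by push_cast; ring,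
      show ((n + j : ℤ) : ℝ) * x - (φ + ψ) = (n * x - φ) + (j * x - ψ) by push_cast; ring,
      Real.cos_sub (n * x - φ), Real.cos_add (n * x - φ)]
    ring
  simp_rw [e]
  rw [intervalIntegral.integral_add (Continuous.intervalIntegrable (by fun_prop) _ _)
    (Continuous.intervalIntegrable (by fun_prop) _ _), intervalIntegral.integral_const_mul,
    intervalIntegral.integral_const_mul, cos_int, cos_int]
  simp only [sub_eq_zero, add_eq_zero_iff_eq_neg]
  split_ifs <;> ring

theorem decay_aux {lam X Y : ℝ} {x y : ℤ → ℝ} (hx : ∀ n, |x n| ≤ X) (hy : ∀ n, |y n| ≤ Y)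
    (h : ∀ n : ℤ, ((n : ℝ) ^ 2 - lam) * x n + y n = 0) (n : ℤ) :
    (1 + (n : ℝ) ^ 2) * |x n| ≤ Y + (1 + |lam|) * X := by
  have e : (1 + (n : ℝ) ^ 2) * x n = -y n + (1 + lam) * x n := by linear_combination h n
  have e1 : (1 + (n : ℝ) ^ 2) * |x n| = |(1 + (n : ℝ) ^ 2) * x n| := by
    rw [abs_mul, abs_of_nonneg (a := 1 + (n : ℝ) ^ 2) (by positivity)]
  rw [e1, e]
  have h1 := abs_add_le (-y n) ((1 + lam) * x n)
  have h2 : |1 + lam| ≤ 1 + |lam| := by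
    have := abs_add_le 1 lam
    simpa using this
  have h3 := abs_mul_le_aux h2 (hx n)
  rw [abs_neg] at h1
  linarith [hy n]

theorem shift_aux {C : ℝ} {a : ℤ → ℝ} (h : ∀ n : ℤ, (1 + (n : ℝ) ^ 2) * |a n| ≤ C) (n k : ℤ)
    (hk : (k : ℝ) ^ 2 ≤ 16) : |(1 + (n : ℝ) ^ 2) * a (n + k)| ≤ 33 * C := by
  rw [abs_mul, abs_of_nonneg (by positivity)]
  have h1 := h (n + k)
  push_cast at h1
  have h2 : 1 + (n : ℝ) ^ 2 ≤ 33 * (1 + ((n : ℝ) + k) ^ 2) := by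
    nlinarith [sq_nonneg ((n : ℝ) + 2 * k), sq_nonneg ((n : ℝ) + k)]
  have := mul_le_mul_of_nonneg_right h2 (abs_nonneg (a (n + k)))
  linarith

theorem Sol.decay {B D lam σ : ℝ} {j : ℤ} {a : ℤ → ℝ} (h : Sol B D lam σ j a) :
    ∃ C, ∀ n : ℤ, (1 + (n : ℝ) ^ 2) * ((1 + (n : ℝ) ^ 2) * |a n|) ≤ C := by
  have h1 := decay_aux h.bdd (WW_bound h.bdd) h.rc
  set C := 2 * (|B| + |D|) * 1 + (1 + |lam|) * 1
  have hy : ∀ n : ℤ, |(1 + (n : ℝ) ^ 2) * WW B D a n| ≤ |B| * (33 * C + 33 * C) +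
      |D| * (33 * C + 33 * C) := by
    intro n
    have s1 := shift_aux h1 n (-2) (by norm_num)
    have s2 := shift_aux h1 n (2) (by norm_num)
    have s3 := shift_aux h1 n (-4) (by norm_num)
    have s4 := shift_aux h1 n (4) (by norm_num)
    have e : (1 + (n : ℝ) ^ 2) * WW B D a n =
      B * ((1 + (n : ℝ) ^ 2) * a (n + -2) + (1 + (n : ℝ) ^ 2) * a (n + 2)) +
      D * ((1 + (n : ℝ) ^ 2) * a (n + -4) + (1 + (n : ℝ) ^ 2) * a (n + 4)) := by
      unfold WW
      simp only [← sub_eq_add_neg]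
      ring
    rw [e]
    refine (abs_add_le _ _).trans (add_le_add ?_ ?_)
    · exact abs_mul_le_aux le_rfl ((abs_add_le _ _).trans (add_le_add s1 s2))
    · exact abs_mul_le_aux le_rfl ((abs_add_le _ _).trans (add_le_add s3 s4))
  have hx : ∀ n : ℤ, |(1 + (n : ℝ) ^ 2) * a n| ≤ C := by
    intro n
    rw [abs_mul, abs_of_nonneg (by positivity)]
    exact h1 n
  refine ⟨|B| * (33 * C + 33 * C) + |D| * (33 * C + 33 * C) + (1 + |lam|) * C, fun n => ?_⟩
  have := decay_aux hx hy (lam := lam) (fun n => by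
    linear_combination (1 + (n : ℝ) ^ 2) * h.rc n) n
  rw [abs_mul (1 + (n : ℝ) ^ 2) (a n), abs_of_nonneg (a := 1 + (n : ℝ) ^ 2) (by positivity)] at this
  exact this

theorem Sol.summ {B D lam σ : ℝ} {j : ℤ} {a : ℤ → ℝ} (h : Sol B D lam σ j a) :
    Summable (fun n : ℤ => (1 + (n : ℝ) ^ 2) * |a n|) := by
  obtain ⟨C, hC⟩ := h.decay
  have hs : Summable (fun n : ℤ => C * (1 / (n : ℝ) ^ 2)) :=
    (Real.summable_one_div_int_pow.2 (by norm_num)).mul_left C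
  refine Summable.of_norm_bounded_eventually hs ?_
  have : ∀ᶠ n : ℤ in Filter.cofinite, n ≠ 0 :=
    Filter.eventually_cofinite_ne 0
  filter_upwards [this] with n hn
  have hn' : 0 < (n : ℝ) ^ 2 := by positivity
  have hp : 0 ≤ (1 + (n : ℝ) ^ 2) * |a n| := by positivity
  rw [Real.norm_of_nonneg hp, mul_one_div, le_div_iff₀ hn']
  nlinarith [hC n]

theorem Sol.synth {B D lam σ φ : ℝ} {j : ℤ} {a : ℤ → ℝ} (h : Sol B D lam σ j a) (hp : Ph φ σ) :
    ∃ f, EF B D ((-1) ^ j) lam f ∧ fc φ f j ≠ 0 ∧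
      (∀ ψ, Real.cos (φ - ψ) = 0 → Real.cos (φ + ψ) = 0 → fc ψ f j = 0) := by
  have hs := h.summ
  set u : ℤ → ℝ := fun n : ℤ => (1 + (n : ℝ) ^ 2) * |a n| with hu
  have hu0 : ∀ n x, |x| ≤ 1 → |a n * x| ≤ u n := by
    intro n x hx
    have := abs_mul_le_aux (le_refl |a n|) hx
    simp only [hu]
    nlinarith [abs_nonneg (a n), sq_nonneg (n : ℝ), mul_nonneg (sq_nonneg (n : ℝ)) (abs_nonneg (a n))]
  have hu2 : ∀ (n : ℤ) x, |x| ≤ 1 → |(-(n : ℝ) ^ 2 * a n) * x| ≤ u n := by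
    intro n x hx
    have := abs_mul_le_aux (le_refl |-(n : ℝ) ^ 2 * a n|) hx
    rw [abs_mul (-(n : ℝ) ^ 2), abs_neg, abs_of_nonneg (sq_nonneg (n : ℝ))] at this
    simp only [hu]
    nlinarith [abs_nonneg (a n)]
  have hu1 : ∀ (n : ℤ) x, |x| ≤ 1 → |(-(n : ℝ) * a n) * x| ≤ u n := by
    intro n x hx
    have := abs_mul_le_aux (le_refl |-(n : ℝ) * a n|) hx
    rw [abs_mul (-(n : ℝ)), abs_neg] at this
    have h3 : |(n : ℝ)| ≤ 1 + (n : ℝ) ^ 2 := by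
      rw [← sq_abs]
      nlinarith [sq_nonneg (|(n : ℝ)| - 1), abs_nonneg (n : ℝ)]
    have := mul_le_mul_of_nonneg_right h3 (abs_nonneg (a n))
    simp only [hu]
    linarith
  have l : ∀ (n : ℤ) x, HasDerivAt (fun x : ℝ => n * x - φ) (n : ℝ) x := by
    intro n x
    simpa using ((hasDerivAt_id x).const_mul (n : ℝ)).sub_const φ
  have hsum0 : ∀ (x : ℝ), Summable (fun n : ℤ => a n * Real.cos (n * x - φ)) := fun x =>
    Summable.of_norm_bounded hs (fun n => hu0 n _ (Real.abs_cos_le_one _))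
  have hsum1 : ∀ (x : ℝ), Summable (fun n : ℤ => (-(n : ℝ) * a n) * Real.sin (n * x - φ)) :=
    fun x => Summable.of_norm_bounded hs (fun n => hu1 n _ (Real.abs_sin_le_one _))
  have hsum2 : ∀ (x : ℝ), Summable (fun n : ℤ => (-(n : ℝ) ^ 2 * a n) * Real.cos (n * x - φ)) :=
    fun x => Summable.of_norm_bounded hs (fun n => hu2 n _ (Real.abs_cos_le_one _))
  let f : ℝ → ℝ := fun x => ∑' n : ℤ, a n * Real.cos (n * x - φ)
  have hd1 : ∀ x, HasDerivAt f (∑' n : ℤ, (-(n : ℝ) * a n) * Real.sin (n * x - φ)) x := by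
    intro x
    refine hasDerivAt_tsum (g := fun (n : ℤ) (x : ℝ) => a n * Real.cos (n * x - φ))
      (g' := fun (n : ℤ) (x : ℝ) => (-(n : ℝ) * a n) * Real.sin (n * x - φ)) hs
      (fun n y => ?_) (fun n y => hu1 n _ (Real.abs_sin_le_one _))
      (hsum0 0) x
    refine ((l n y).cos.const_mul (a n)).congr_deriv ?_
    ring
  have e1 : deriv f = fun x => ∑' n : ℤ, (-(n : ℝ) * a n) * Real.sin (n * x - φ) :=
    funext fun x => (hd1 x).deriv
  have hd2 : ∀ x, HasDerivAt (deriv f) (∑' n : ℤ, (-(n : ℝ) ^ 2 * a n) * Real.cos (n * x - φ)) x := by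
    intro x
    rw [e1]
    refine hasDerivAt_tsum (g := fun (n : ℤ) (x : ℝ) => (-(n : ℝ) * a n) * Real.sin (n * x - φ))
      (g' := fun (n : ℤ) (x : ℝ) => (-(n : ℝ) ^ 2 * a n) * Real.cos (n * x - φ)) hs
      (fun n y => ?_) (fun n y => hu2 n _ (Real.abs_cos_le_one _))
      (hsum1 0) x
    refine ((l n y).sin.const_mul (-(n : ℝ) * a n)).congr_deriv ?_
    ring
  have e2 : deriv (deriv f) = fun x => ∑' n : ℤ, (-(n : ℝ) ^ 2 * a n) * Real.cos (n * x - φ) :=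
    funext fun x => (hd2 x).deriv
  have hintg : ∀ ψ, HasSum (fun n : ℤ => a n * ((if n = j then Real.pi * Real.cos (φ - ψ) else 0) +
      (if n = -j then Real.pi * Real.cos (φ + ψ) else 0))) (fc ψ f j) := by
    intro ψ
    have hh : ∀ n : ℤ, a n * ((if n = j then Real.pi * Real.cos (φ - ψ) else 0) +
      (if n = -j then Real.pi * Real.cos (φ + ψ) else 0)) =
      ∫ x in (0:ℝ)..(2 * Real.pi), a n * Real.cos (n * x - φ) * Real.cos (j * x - ψ) := by
      intro n
      rw [← cos_cos_int, ← intervalIntegral.integral_const_mul]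
      simp only [mul_assoc]
    simp_rw [hh]
    unfold fc
    refine intervalIntegral.hasSum_integral_of_dominated_convergence (fun n _ => u n) ?_ ?_ ?_ ?_ ?_
    · intro n
      apply Continuous.aestronglyMeasurable
      fun_prop
    · intro n
      refine Filter.Eventually.of_forall fun t _ => ?_
      rw [mul_assoc]
      apply hu0
      have := abs_mul_le_aux (Real.abs_cos_le_one (n * t - φ)) (Real.abs_cos_le_one (j * t - ψ))
      simpa using this
    · exact Filter.Eventually.of_forall fun t _ => hs
    · exact intervalIntegrable_const
    · exact Filter.Eventually.of_forall fun t _ => (hsum0 t).hasSum.mul_right _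
  refine ⟨f, ⟨?_, ?_, ?_⟩, ?_, ?_⟩
  · rw [contDiff_two_aux]
    refine ⟨fun x => (hd1 x).differentiableAt, fun x => (hd2 x).differentiableAt, ?_⟩
    rw [e2]
    exact continuous_tsum (fun n => by fun_prop) hs (fun n x => hu2 n _ (Real.abs_cos_le_one _))
  · intro x
    rw [e2]
    have H0 := (hsum0 x).hasSum
    have H2 := (hsum2 x).hasSum
    have Hk : ∀ k : ℤ, Summable (fun n : ℤ => a n * Real.cos (((n + k : ℤ) : ℝ) * x - φ)) :=
      fun k => Summable.of_norm_bounded hs (fun n => hu0 n _ (Real.abs_cos_le_one _))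
    have Hs : ∀ k : ℤ, ∑' n : ℤ, a n * Real.cos (((n + k : ℤ) : ℝ) * x - φ) =
        ∑' n : ℤ, a (n - k) * Real.cos (n * x - φ) := by
      intro k
      rw [← (Equiv.subRight k).tsum_eq]
      simp
    have Hks : ∀ k : ℤ, HasSum (fun n : ℤ => a (n - k) * Real.cos (n * x - φ))
        (∑' n : ℤ, a n * Real.cos (((n + k : ℤ) : ℝ) * x - φ)) := by
      intro k
      rw [Hs]
      exact (Summable.of_norm_bounded (hs.comp_injective (Equiv.subRight k).injective)
        (fun n => hu0 (n - k) _ (Real.abs_cos_le_one _))).hasSum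
    have V1 : HasSum (fun n : ℤ => vv B D x * (a n * Real.cos (n * x - φ))) (vv B D x * f x) :=
      H0.mul_left _
    have V2 : HasSum (fun n : ℤ => vv B D x * (a n * Real.cos (n * x - φ)))
        (B * (∑' n : ℤ, a n * Real.cos (((n + -2 : ℤ) : ℝ) * x - φ) +
          ∑' n : ℤ, a n * Real.cos (((n + 2 : ℤ) : ℝ) * x - φ)) +
        D * (∑' n : ℤ, a n * Real.cos (((n + -4 : ℤ) : ℝ) * x - φ) +
          ∑' n : ℤ, a n * Real.cos (((n + 4 : ℤ) : ℝ) * x - φ))) := by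
      have := ((((Hk (-2)).hasSum.add (Hk 2).hasSum).mul_left B).add
        (((Hk (-4)).hasSum.add (Hk 4).hasSum).mul_left D))
      refine this.congr_fun ?_
      intro n
      have := vv_cos B D φ x n
      simp only [sub_eq_add_neg] at this ⊢
      linear_combination a n * this
    have V3 := ((((Hks (-2)).add (Hks 2)).mul_left B).add (((Hks (-4)).add (Hks 4)).mul_left D))
    have V4 := (H2.neg.add V3).sub (H0.mul_left lam)
    have V5 : HasSum (fun _ : ℤ => (0 : ℝ)) _ := V4.congr_fun (fun n => by
      have := h.rc n
      unfold WW at this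
      simp only [sub_neg_eq_add]
      linear_combination (-Real.cos (n * x - φ)) * this)
    have V6 := V5.unique hasSum_zero
    rw [V1.unique V2]
    change _ = lam * ∑' n : ℤ, a n * Real.cos (n * x - φ)
    linarith
  · intro x
    change ∑' n : ℤ, a n * Real.cos (n * (x + Real.pi) - φ) = (-1) ^ j *
      ∑' n : ℤ, a n * Real.cos (n * x - φ)
    rw [← tsum_mul_left]
    congr 1
    funext n
    rcases Int.even_or_odd (n - j) with hn | hn
    · rw [show (n : ℝ) * (x + Real.pi) - φ = (n * x - φ) + n * Real.pi by ring,
        Real.cos_add_int_mul_pi, zpow_par.1 hn]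
      ring
    · rw [h.par n hn]; simp
  · have h1 : HasSum (fun n : ℤ => a n * ((if n = j then Real.pi * Real.cos (φ - φ) else 0) +
      (if n = -j then Real.pi * Real.cos (φ + φ) else 0)))
        (a j * (Real.pi * Real.cos (φ - φ)) + a (-j) * (Real.pi * Real.cos (φ + φ))) := by
      have := (hasSum_ite_eq j (a j * (Real.pi * Real.cos (φ - φ)))).add
        (hasSum_ite_eq (-j) (a (-j) * (Real.pi * Real.cos (φ + φ))))
      refine this.congr_fun ?_
      intro n
      by_cases c1 : n = j
      · subst c1
        by_cases c2 : n = -n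
        · rw [← c2]; simp; ring
        · simp [c2]
      · by_cases c2 : n = -j
        · subst c2; simp [c1]
        · simp [c1, c2]
    have hc : Real.cos (φ + φ) = σ := by
      rcases hp with ⟨rfl, rfl⟩ | ⟨rfl, rfl⟩
      · simp
      · rw [show Real.pi / 2 + Real.pi / 2 = Real.pi by ring, Real.cos_pi]
    rw [(hintg φ).unique h1, h.sym, h.one, hc, sub_self, Real.cos_zero]
    have : σ * σ = 1 := by rcases hp.sgn with h | h <;> rw [h] <;> norm_num
    have e : 1 * (Real.pi * 1) + σ * 1 * (Real.pi * σ) = 2 * Real.pi := by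
      linear_combination Real.pi * this
    rw [e]
    positivity
  · intro ψ h1 h2
    have := hintg ψ
    simp only [h1, h2, mul_zero, ite_self, add_zero] at this
    exact this.unique hasSum_zero

/-- The eigenspace. -/
def EFsub (B D s lam : ℝ) : Submodule ℝ (ℝ → ℝ) where
  carrier := {f | EF B D s lam f}
  zero_mem' := by
    refine ⟨contDiff_const, fun x => ?_, fun x => by simp⟩
    have : deriv (0 : ℝ → ℝ) = 0 := by funext y; simp
    simp [this]
  add_mem' := by
    intro f g hf hg
    obtain ⟨d1, d2, _⟩ := contDiff_two_aux.1 hf.smooth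
    obtain ⟨d1', d2', _⟩ := contDiff_two_aux.1 hg.smooth
    refine ⟨hf.smooth.add hg.smooth, fun x => ?_, fun x => ?_⟩
    · have e : deriv (f + g) = deriv f + deriv g := by
        funext y; exact deriv_add (d1 y) (d1' y)
      rw [e, deriv_add (d2 x) (d2' x)]
      simp only [Pi.add_apply]
      linear_combination hf.ode x + hg.ode x
    · simp only [Pi.add_apply, hf.per x, hg.per x]; ring
  smul_mem' := by
    intro c f hf
    obtain ⟨d1, d2, _⟩ := contDiff_two_aux.1 hf.smooth
    refine ⟨hf.smooth.const_smul c, fun x => ?_, fun x => ?_⟩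
    · have e : deriv (c • f) = c • deriv f := by
        funext y; exact deriv_const_smul c (d1 y)
      rw [e, deriv_const_smul c (d2 x)]
      simp only [Pi.smul_apply, smul_eq_mul]
      linear_combination c * hf.ode x
    · simp only [Pi.smul_apply, smul_eq_mul, hf.per x]; ring

/-- Fourier coefficient as a linear functional on the eigenspace. -/
def fcL (B D s lam φ : ℝ) (n : ℤ) : EFsub B D s lam →ₗ[ℝ] ℝ where
  toFun f := fc φ f.1 n
  map_add' := by
    intro f g
    have hf : EF B D s lam f.1 := f.2
    have hg : EF B D s lam g.1 := g.2
    unfold fc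
    rw [← intervalIntegral.integral_add (fc_intble hf.smooth.continuous φ n _ _)
      (fc_intble hg.smooth.continuous φ n _ _)]
    congr 1
    funext x
    simp only [Submodule.coe_add, Pi.add_apply]
    ring
  map_smul' := by
    intro c f
    unfold fc
    simp only [RingHom.id_apply, smul_eq_mul]
    rw [← intervalIntegral.integral_const_mul]
    congr 1
    funext x
    simp only [Submodule.coe_smul, Pi.smul_apply, smul_eq_mul]
    ring

/-- The gap condition. -/
def Gap (j : ℤ) (lam : ℝ) : Prop :=
  ∀ n : ℤ, Even (n - j) → n ≠ j → n ≠ -j → 1 ≤ |(n : ℝ) ^ 2 - lam|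

theorem ph0 : Ph 0 1 := Or.inl ⟨rfl, rfl⟩
theorem ph1 : Ph (Real.pi / 2) (-1) := Or.inr ⟨rfl, rfl⟩

theorem EF.eq_zero {B D lam : ℝ} {j : ℤ} {f : ℝ → ℝ} (hBD : |B| + |D| ≤ 1 / 12)
    (h : EF B D ((-1) ^ j) lam f) (hG : Gap j lam) (h0 : fc 0 f j = 0)
    (h1 : fc (Real.pi / 2) f j = 0) : f = 0 :=
  fourier_inj h.smooth.continuous (h.per2 (zpow_sq_aux j))
    ((h.raw ph0 hG).zero hBD (Or.inl rfl) h0) ((h.raw ph1 hG).zero hBD (Or.inr rfl) h1)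

theorem EF.lam_eq {B D lam lam' φ σ : ℝ} {j : ℤ} {f : ℝ → ℝ} {a : ℤ → ℝ}
    (hBD : |B| + |D| ≤ 1 / 12) (hp : Ph φ σ)
    (h : EF B D ((-1) ^ j) lam f) (hG : Gap j lam) (h0 : fc φ f j ≠ 0)
    (hS : Sol B D lam' σ j a) : lam = lam' :=
  (((h.raw hp hG).sol hBD hp.sgn h0).unique hBD hS).1

theorem finrank_one_aux {V : Type*} [AddCommGroup V] [Module ℝ V] (L : V →ₗ[ℝ] ℝ)
    (hi : ∀ x, L x = 0 → x = 0) (x : V) (hx : x ≠ 0) : Module.finrank ℝ V = 1 := by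
  have hinj : Function.Injective L := (injective_iff_map_eq_zero L).2 hi
  have hsurj : Function.Surjective L := LinearMap.surjective_of_ne_zero (by
    intro h
    exact hx (hi x (by rw [h]; rfl)))
  rw [(LinearEquiv.ofBijective L ⟨hinj, hsurj⟩).finrank_eq]
  simp

theorem finrank_two_aux {V : Type*} [AddCommGroup V] [Module ℝ V] (L L' : V →ₗ[ℝ] ℝ)
    (hi : ∀ x, L x = 0 → L' x = 0 → x = 0) (x y : V) (hx : L x ≠ 0) (hx' : L' x = 0)
    (hy : L y = 0) (hy' : L' y ≠ 0) : Module.finrank ℝ V = 2 := by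
  have hinj : Function.Injective (L.prod L') := (injective_iff_map_eq_zero _).2 (by
    intro z hz
    rw [LinearMap.prod_apply, Function.prod, Prod.mk_eq_zero] at hz
    exact hi z hz.1 hz.2)
  have hsurj : Function.Surjective (L.prod L') := by
    rintro ⟨p, r⟩
    refine ⟨(p / L x) • x + (r / L' y) • y, ?_⟩
    simp [LinearMap.prod_apply, hx', hy, hx, hy']
  rw [(LinearEquiv.ofBijective _ ⟨hinj, hsurj⟩).finrank_eq]
  simp

theorem mult_main {B D le lo : ℝ} {j : ℤ} {ae ao : ℤ → ℝ} (hBD : |B| + |D| ≤ 1 / 12)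
    (he : Sol B D le 1 j ae) (ho : Sol B D lo (-1) j ao) (hGe : Gap j le) (hGo : Gap j lo) :
    (∀ lam f, f ≠ 0 → EF B D ((-1) ^ j) lam f → Gap j lam → lam = le ∨ lam = lo) ∧
    (le ≠ lo → Module.finrank ℝ (EFsub B D ((-1) ^ j) le) = 1 ∧
      Module.finrank ℝ (EFsub B D ((-1) ^ j) lo) = 1) ∧
    (le = lo → Module.finrank ℝ (EFsub B D ((-1) ^ j) le) = 2) := by
  obtain ⟨fe, hfe, ne, ze⟩ := he.synth ph0
  obtain ⟨fo, hfo, no, zo⟩ := ho.synth ph1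
  have ze' := ze (Real.pi / 2) (by simp) (by simp)
  have zo' := zo 0 (by simp) (by simp)
  have fz : ∀ φ n, fc φ 0 n = 0 := by intro φ n; simp [fc]
  have hfe0 : fe ≠ 0 := by rintro rfl; exact ne (fz _ _)
  have hfo0 : fo ≠ 0 := by rintro rfl; exact no (fz _ _)
  refine ⟨?_, ?_, ?_⟩
  · intro lam f hf0 hf hG
    by_cases h0 : fc 0 f j = 0
    · by_cases h1 : fc (Real.pi / 2) f j = 0
      · exact absurd (hf.eq_zero hBD hG h0 h1) hf0
      · exact Or.inr (hf.lam_eq hBD ph1 hG h1 ho)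
    · exact Or.inl (hf.lam_eq hBD ph0 hG h0 he)
  · intro hne
    constructor
    · refine finrank_one_aux (fcL B D _ le 0 j) ?_ ⟨fe, hfe⟩ (by simpa [Subtype.ext_iff] using hfe0)
      rintro ⟨f, hf⟩ h0
      have hf' : EF B D ((-1) ^ j) le f := hf
      have h1 : fc (Real.pi / 2) f j = 0 := by
        by_contra h1
        exact hne (hf'.lam_eq hBD ph1 hGe h1 ho)
      exact Subtype.ext (hf'.eq_zero hBD hGe h0 h1)
    · refine finrank_one_aux (fcL B D _ lo (Real.pi / 2) j) ?_ ⟨fo, hfo⟩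
        (by simpa [Subtype.ext_iff] using hfo0)
      rintro ⟨f, hf⟩ h1
      have hf' : EF B D ((-1) ^ j) lo f := hf
      have h0 : fc 0 f j = 0 := by
        by_contra h0
        exact hne (hf'.lam_eq hBD ph0 hGo h0 he).symm
      exact Subtype.ext (hf'.eq_zero hBD hGo h0 h1)
  · rintro rfl
    refine finrank_two_aux (fcL B D _ le 0 j) (fcL B D _ le (Real.pi / 2) j) ?_ ⟨fe, hfe⟩ ⟨fo, hfo⟩
      ne ze' zo' no
    rintro ⟨f, hf⟩ h0 h1
    have hf' : EF B D ((-1) ^ j) le f := hf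
    exact Subtype.ext (hf'.eq_zero hBD hGe h0 h1)

theorem mult_zero {B D le : ℝ} {ae : ℤ → ℝ} (hBD : |B| + |D| ≤ 1 / 12)
    (he : Sol B D le 1 0 ae) (hGe : Gap 0 le) :
    (∀ lam f, f ≠ 0 → EF B D ((-1) ^ (0 : ℤ)) lam f → Gap 0 lam → lam = le) ∧
    Module.finrank ℝ (EFsub B D ((-1) ^ (0 : ℤ)) le) = 1 := by
  obtain ⟨fe, hfe, ne, -⟩ := he.synth ph0
  have fz : ∀ φ n, fc φ 0 n = 0 := by intro φ n; simp [fc]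
  have hfe0 : fe ≠ 0 := by rintro rfl; exact ne (fz _ _)
  have h1 : ∀ f, fc (Real.pi / 2) f 0 = 0 := by intro f; simp [fc]
  refine ⟨?_, ?_⟩
  · intro lam f hf0 hf hG
    by_cases h0 : fc 0 f 0 = 0
    · exact absurd (hf.eq_zero hBD hG h0 (h1 f)) hf0
    · exact hf.lam_eq hBD ph0 hG h0 he
  · refine finrank_one_aux (fcL B D _ le 0 0) ?_ ⟨fe, hfe⟩ (by simpa [Subtype.ext_iff] using hfe0)
    rintro ⟨f, hf⟩ h0
    have hf' : EF B D ((-1) ^ (0 : ℤ)) le f := hf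
    exact Subtype.ext (hf'.eq_zero hBD hGe h0 (h1 f))

theorem comb_lt {μ : ℕ → ℝ} (hμ : Monotone μ) {R l1 l2 : ℝ} (h1 : l1 ≤ R) (h2 : l2 ≤ R)
    (hv : ∀ n, μ n ≤ R → μ n = l1 ∨ μ n = l2) (hlt : l1 < l2)
    (hc1 : Nat.card {n : ℕ // μ n = l1} = 1) (hc2 : Nat.card {n : ℕ // μ n = l2} = 1) :
    μ 0 = l1 ∧ μ 1 = l2 := by
  obtain ⟨s1, ⟨n1, e1⟩⟩ := Nat.card_eq_one_iff_unique.1 hc1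
  obtain ⟨s2, ⟨n2, e2⟩⟩ := Nat.card_eq_one_iff_unique.1 hc2
  have m0 : μ 0 ≤ l1 := e1 ▸ hμ (Nat.zero_le n1)
  have z0 : μ 0 = l1 := by
    rcases hv 0 (m0.trans h1) with h | h
    · exact h
    · linarith
  refine ⟨z0, ?_⟩
  have hn2 : 1 ≤ n2 := by
    rcases Nat.eq_zero_or_pos n2 with h | h
    · subst h; linarith
    · exact h
  have m1 : μ 1 ≤ l2 := e2 ▸ hμ hn2
  rcases hv 1 (m1.trans h2) with h | h
  · have := s1.elim ⟨0, z0⟩ ⟨1, h⟩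
    simp at this
  · exact h

theorem comb {μ : ℕ → ℝ} (hμ : Monotone μ) {R l1 l2 : ℝ} (h1 : l1 ≤ R) (h2 : l2 ≤ R)
    (hv : ∀ n, μ n ≤ R → μ n = l1 ∨ μ n = l2)
    (hne : l1 ≠ l2 → Nat.card {n : ℕ // μ n = l1} = 1 ∧ Nat.card {n : ℕ // μ n = l2} = 1)
    (heq : l1 = l2 → Nat.card {n : ℕ // μ n = l1} = 2) : μ 1 - μ 0 = |l1 - l2| := by
  rcases lt_trichotomy l1 l2 with h | h | h
  · obtain ⟨a1, a2⟩ := hne h.ne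
    obtain ⟨z0, z1⟩ := comb_lt hμ h1 h2 hv h a1 a2
    rw [z0, z1, abs_of_neg (by linarith)]; ring
  · obtain ⟨⟨x, hx⟩, ⟨y, hy⟩, hxy, -⟩ := Nat.card_eq_two_iff.1 (heq h)
    have hxy' : x ≠ y := fun h => hxy (Subtype.ext h)
    subst h
    obtain ⟨z, hz, hz1⟩ : ∃ z, μ z = l1 ∧ 1 ≤ z := by
      rcases Nat.eq_zero_or_pos x with h | h
      · exact ⟨y, hy, by omega⟩
      · exact ⟨x, hx, h⟩
    have e0 : μ 0 = l1 := by
      have := hv 0 ((hμ (Nat.zero_le z)).trans (hz.le.trans h1))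
      simpa using this
    have e1 : μ 1 = l1 := by
      have := hv 1 ((hμ hz1).trans (hz.le.trans h1))
      simpa using this
    rw [e0, e1]; simp
  · obtain ⟨a1, a2⟩ := hne h.ne'
    obtain ⟨z0, z1⟩ := comb_lt hμ h2 h1 (fun n hn => (hv n hn).symm) h a2 a1
    rw [z0, z1, abs_of_pos (by linarith)]

theorem perMult_eq {v : ℝ → ℝ} {B D : ℝ} (hv : ∀ x, v x = vv B D x) (lam : ℝ) :
    (∀ f, IsPerEF v lam f ↔ EF B D 1 lam f) ∧
    perMult v lam = Module.finrank ℝ (EFsub B D 1 lam) := by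
  have h : ∀ f, IsPerEF v lam f ↔ EF B D 1 lam f := by
    intro f
    constructor
    · rintro ⟨h1, h2, h3⟩
      exact ⟨h1, fun x => by rw [← hv]; exact h2 x, fun x => by rw [h3, one_mul]⟩
    · rintro ⟨h1, h2, h3⟩
      exact ⟨h1, fun x => by rw [hv]; exact h2 x, fun x => by rw [h3, one_mul]⟩
  refine ⟨h, ?_⟩
  unfold perMult
  have e : {f : ℝ → ℝ | IsPerEF v lam f} = (EFsub B D 1 lam : Set (ℝ → ℝ)) := Set.ext h
  rw [e, Submodule.span_eq]

theorem semiMult_eq {v : ℝ → ℝ} {B D : ℝ} (hv : ∀ x, v x = vv B D x) (lam : ℝ) :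
    (∀ f, IsSemiEF v lam f ↔ EF B D (-1) lam f) ∧
    semiMult v lam = Module.finrank ℝ (EFsub B D (-1) lam) := by
  have h : ∀ f, IsSemiEF v lam f ↔ EF B D (-1) lam f := by
    intro f
    constructor
    · rintro ⟨h1, h2, h3⟩
      exact ⟨h1, fun x => by rw [← hv]; exact h2 x, fun x => by rw [h3]; ring⟩
    · rintro ⟨h1, h2, h3⟩
      exact ⟨h1, fun x => by rw [hv]; exact h2 x, fun x => by rw [h3]; ring⟩
  refine ⟨h, ?_⟩
  unfold semiMult
  have e : {f : ℝ → ℝ | IsSemiEF v lam f} = (EFsub B D (-1) lam : Set (ℝ → ℝ)) := Set.ext h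
  rw [e, Submodule.span_eq]

theorem sq_ge_aux {n k : ℤ} (h : k ≤ n ∨ n ≤ -k) (hk : 0 ≤ k) : (k : ℝ) ^ 2 ≤ (n : ℝ) ^ 2 := by
  have : k ^ 2 ≤ n ^ 2 := by
    rcases h with h | h <;> nlinarith
  exact_mod_cast this

theorem gap0 {lam : ℝ} (h : lam ≤ 2) : Gap 0 lam := by
  rintro n ⟨k, hk⟩ h1 h2
  have := sq_ge_aux (n := n) (k := 2) (by omega) (by norm_num)
  norm_num at this
  exact le_trans (by linarith) (le_abs_self _)

theorem gap1 {lam : ℝ} (h : lam ≤ 5) : Gap 1 lam := by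
  rintro n ⟨k, hk⟩ h1 h2
  have := sq_ge_aux (n := n) (k := 3) (by omega) (by norm_num)
  norm_num at this
  exact le_trans (by linarith) (le_abs_self _)

theorem gap2 {lam : ℝ} (h' : 2 ≤ lam) (h : lam ≤ 10) : Gap 2 lam := by
  rintro n ⟨k, hk⟩ h1 h2
  by_cases h0 : n = 0
  · subst h0
    exact le_trans (by norm_num; linarith) (neg_le_abs _)
  · have := sq_ge_aux (n := n) (k := 4) (by omega) (by norm_num)
    norm_num at this
    exact le_trans (by linarith) (le_abs_self _)

theorem semi_gap {v : ℝ → ℝ} {B D t : ℝ} {lamM : ℕ → ℝ} (hv : ∀ x, v x = vv B D x)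
    (hB : |B| ≤ t) (hD : |D| ≤ t ^ 2) (ht : t ≤ 1 / 24) (hM : EnumSemi v lamM) :
    |(lamM 2 - lamM 1) - (|2 * B|)| ≤ 10 * t ^ 3 := by
  have ht0 : 0 ≤ t := (abs_nonneg _).trans hB
  have hBD : |B| + |D| ≤ 1 / 12 := by nlinarith
  obtain ⟨le, ae, he⟩ := Sol.exist (B := B) (D := D) (σ := 1) (j := 1) hBD (Or.inl rfl)
    (by norm_num)
  obtain ⟨lo, ao, ho⟩ := Sol.exist (B := B) (D := D) (σ := -1) (j := 1) hBD (Or.inr rfl)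
    (by norm_num)
  have ce := abs_le.1 he.lam_close
  have co := abs_le.1 ho.lam_close
  norm_num at ce co
  have be : le ≤ 5 := by linarith
  have bo : lo ≤ 5 := by linarith
  obtain ⟨M1, M2, M3⟩ := mult_main hBD he ho (gap1 be) (gap1 bo)
  rw [zpow_one] at M1 M2 M3
  obtain ⟨mono, ex, card⟩ := hM
  have hmono : Monotone (fun n => lamM (n + 1)) := by
    intro m n h
    exact mono (by simp) (by simp) (by omega)
  have hcard : ∀ lam, Nat.card {n : ℕ // lamM (n + 1) = lam} =
      Module.finrank ℝ (EFsub B D (-1) lam) := by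
    intro lam
    rw [← (semiMult_eq hv lam).2, ← card lam]
    refine Nat.card_congr ⟨fun n => ⟨n.1 + 1, by omega, n.2⟩, fun n => ⟨n.1 - 1, ?_⟩, ?_, ?_⟩
    · rw [Nat.sub_add_cancel n.2.1]; exact n.2.2
    · intro n; simp
    · intro n; exact Subtype.ext (Nat.sub_add_cancel n.2.1)
  have key := comb hmono be bo (by
      intro n hn
      obtain ⟨f, hf0, hf⟩ := ex (n + 1) (by omega)
      exact M1 _ f hf0 (((semiMult_eq hv _).1 f).1 hf) (gap1 hn))
    (by simp only [hcard]; exact M2) (by simp only [hcard]; exact M3)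
  simp only [zero_add, one_add_one_eq_two] at key
  rw [key]
  refine (abs_abs_sub_abs_le_abs_sub _ _).trans ?_
  have a1 := abs_le.1 (he.asymp1 (Or.inl rfl) hB hD ht)
  have a2 := abs_le.1 (ho.asymp1 (Or.inr rfl) hB hD ht)
  rw [abs_le]
  constructor <;> linarith

theorem per_gap {v : ℝ → ℝ} {B D t : ℝ} {lamP : ℕ → ℝ} (hv : ∀ x, v x = vv B D x)
    (hB : |B| ≤ t) (hD : |D| ≤ t ^ 2) (ht : t ≤ 1 / 24) (hP : EnumPer v lamP) :
    |(lamP 2 - lamP 1) - (|2 * D + B ^ 2 / 2|)| ≤ 24 * t ^ 4 := by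
  have ht0 : 0 ≤ t := (abs_nonneg _).trans hB
  have hBD : |B| + |D| ≤ 1 / 12 := by nlinarith
  obtain ⟨le, ae, he⟩ := Sol.exist (B := B) (D := D) (σ := 1) (j := 2) hBD (Or.inl rfl)
    (by norm_num)
  obtain ⟨lo, ao, ho⟩ := Sol.exist (B := B) (D := D) (σ := -1) (j := 2) hBD (Or.inr rfl)
    (by norm_num)
  obtain ⟨lz, az, hz⟩ := Sol.exist (B := B) (D := D) (σ := 1) (j := 0) hBD (Or.inl rfl)
    (by norm_num)
  have ce := abs_le.1 he.lam_close
  have co := abs_le.1 ho.lam_close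
  have cz := abs_le.1 hz.lam_close
  norm_num at ce co cz
  have be : le ≤ 10 := by linarith
  have bo : lo ≤ 10 := by linarith
  have be' : 2 < le := by linarith
  have bo' : 2 < lo := by linarith
  have bz : lz ≤ 2 := by linarith
  obtain ⟨M1, M2, M3⟩ := mult_main hBD he ho (gap2 be'.le be) (gap2 bo'.le bo)
  obtain ⟨Z1, Z2⟩ := mult_zero hBD hz (gap0 bz)
  have p2 : (-1 : ℝ) ^ (2 : ℤ) = 1 := by norm_num
  rw [p2] at M1 M2 M3
  rw [zpow_zero] at Z1 Z2
  obtain ⟨mono, ex, card⟩ := hP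
  simp only [fun lam => (perMult_eq hv lam).2] at card
  -- exactly one eigenvalue at most 2
  obtain ⟨s1, ⟨n1, e1⟩⟩ := Nat.card_eq_one_iff_unique.1 ((card lz).trans Z2)
  have hlow : ∀ n, lamP n ≤ 2 → lamP n = lz := by
    intro n hn
    obtain ⟨f, hf0, hf⟩ := ex n
    exact Z1 _ f hf0 (((perMult_eq hv _).1 f).1 hf) (gap0 hn)
  have z0 : lamP 0 = lz := hlow 0 ((mono (Nat.zero_le n1)).trans (e1.le.trans bz))
  have hhigh : ∀ n, 2 < lamP (n + 1) := by
    intro n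
    by_contra h
    have := s1.elim ⟨0, z0⟩ ⟨n + 1, hlow _ (not_lt.1 h)⟩
    simp at this
  have hmono : Monotone (fun n => lamP (n + 1)) := by
    intro m n h
    exact mono (by omega)
  have hcard : ∀ lam, 2 < lam → Nat.card {n : ℕ // lamP (n + 1) = lam} =
      Module.finrank ℝ (EFsub B D 1 lam) := by
    intro lam hlam
    rw [← card lam]
    have hpos : ∀ n, lamP n = lam → n - 1 + 1 = n := by
      intro n hn
      rcases Nat.eq_zero_or_pos n with h | h
      · subst h; linarith
      · omega
    refine Nat.card_congr ⟨fun n => ⟨n.1 + 1, n.2⟩, fun n => ⟨n.1 - 1, ?_⟩, ?_, ?_⟩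
    · rw [hpos n.1 n.2]; exact n.2
    · intro n; simp
    · intro n; exact Subtype.ext (hpos n.1 n.2)
  have key := comb hmono be bo (by
      intro n hn
      obtain ⟨f, hf0, hf⟩ := ex (n + 1)
      exact M1 _ f hf0 (((perMult_eq hv _).1 f).1 hf) (gap2 (hhigh n).le hn))
    (by rw [hcard _ be', hcard _ bo']; exact M2) (by rw [hcard _ be']; exact M3)
  simp only [zero_add, one_add_one_eq_two] at key
  rw [key]
  refine (abs_abs_sub_abs_le_abs_sub _ _).trans ?_
  have a1 := abs_le.1 (he.asymp2 (Or.inl rfl) hB hD ht)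
  have a2 := abs_le.1 (ho.asymp2 (Or.inr rfl) hB hD ht)
  rw [abs_le]
  constructor <;> linarith

theorem stmt5 (b c m1 : ℝ) (hc : c < 0) (hm1 : 0 < m1)
    (lamP lamM : ℝ → ℕ → ℝ)
    (hP : ∀ q : ℝ, 0 < q →
      EnumPer (fun x => b * q ^ m1 * Real.cos (2 * x) + c * q ^ (2 * m1) * Real.cos (4 * x))
        (lamP q))
    (hM : ∀ q : ℝ, 0 < q →
      EnumSemi (fun x => b * q ^ m1 * Real.cos (2 * x) + c * q ^ (2 * m1) * Real.cos (4 * x))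
        (lamM q)) :
    ∃ C > 0, ∃ δ > 0, ∀ q : ℝ, 0 < q → q < δ →
      |gapLen (lamP q) (lamM q) 1 - |b| * q ^ m1| ≤ C * q ^ (3 * m1) ∧
      |gapLen (lamP q) (lamM q) 2 - |c + b ^ 2 / 8| * q ^ (2 * m1)| ≤ C * q ^ (4 * m1) := by
  set K : ℝ := |b| + |c| + 1 with hK
  have hK1 : 1 ≤ K := by
    have := abs_nonneg b
    have := abs_nonneg c
    linarith
  have hK0 : 0 < K := by linarith
  refine ⟨24 * K ^ 4, by positivity, (1 / (24 * K)) ^ (1 / m1), by positivity, ?_⟩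
  intro q hq hqδ
  set ε : ℝ := q ^ m1 with hε
  have hε0 : 0 < ε := Real.rpow_pos_of_pos hq _
  have hε1 : ε ≤ 1 / (24 * K) := by
    have h1 := Real.rpow_le_rpow hq.le hqδ.le hm1.le
    rwa [← Real.rpow_mul (by positivity), one_div_mul_cancel hm1.ne', Real.rpow_one] at h1
  have hpow : ∀ k : ℕ, q ^ ((k : ℝ) * m1) = ε ^ k := by
    intro k
    rw [mul_comm, Real.rpow_mul hq.le, Real.rpow_natCast]
  have e2 : q ^ (2 * m1) = ε ^ 2 := by exact_mod_cast hpow 2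
  have e3 : q ^ (3 * m1) = ε ^ 3 := by exact_mod_cast hpow 3
  have e4 : q ^ (4 * m1) = ε ^ 4 := by exact_mod_cast hpow 4
  have hP' := hP q hq
  have hM' := hM q hq
  rw [← hε, e2] at hP' hM'
  rw [e2, e3, e4]
  have hv : ∀ x, b * ε * Real.cos (2 * x) + c * ε ^ 2 * Real.cos (4 * x) =
      vv (b * ε / 2) (c * ε ^ 2 / 2) x := by
    intro x; unfold vv; ring
  have ht : K * ε ≤ 1 / 24 := by
    rw [le_div_iff₀ (by positivity)] at hε1
    linarith
  have hB : |b * ε / 2| ≤ K * ε := by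
    rw [abs_div, abs_mul, abs_of_pos hε0, abs_two]
    nlinarith [abs_nonneg b, abs_nonneg c, mul_nonneg (abs_nonneg b) hε0.le,
      mul_nonneg (abs_nonneg c) hε0.le]
  have hD : |c * ε ^ 2 / 2| ≤ (K * ε) ^ 2 := by
    rw [abs_div, abs_mul, abs_of_pos (pow_pos hε0 2), abs_two, mul_pow]
    have h1 : |c| ≤ K ^ 2 := by nlinarith [abs_nonneg b, abs_nonneg c]
    have := mul_le_mul_of_nonneg_right h1 (sq_nonneg ε)
    have := mul_nonneg (abs_nonneg c) (sq_nonneg ε)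
    linarith
  have g1 := semi_gap hv hB hD ht hM'
  have g2 := per_gap hv hB hD ht hP'
  have f1 : gapLen (lamP q) (lamM q) 1 = lamM q 2 - lamM q 1 := by simp [gapLen]
  have f2 : gapLen (lamP q) (lamM q) 2 = lamP q 2 - lamP q 1 := by
    have : ¬ Odd 2 := by decide
    simp [gapLen, this]
  rw [f1, f2]
  constructor
  · have e : |2 * (b * ε / 2)| = |b| * ε := by
      rw [show 2 * (b * ε / 2) = b * ε by ring, abs_mul, abs_of_pos hε0]
    rw [e] at g1
    refine g1.trans ?_
    rw [mul_pow, ← mul_assoc]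
    apply mul_le_mul_of_nonneg_right _ (by positivity)
    have : K ^ 3 ≤ K ^ 4 := pow_le_pow_right₀ hK1 (by norm_num)
    have : 0 ≤ K ^ 4 := by positivity
    linarith
  · have e : |2 * (c * ε ^ 2 / 2) + (b * ε / 2) ^ 2 / 2| = |c + b ^ 2 / 8| * ε ^ 2 := by
      rw [show 2 * (c * ε ^ 2 / 2) + (b * ε / 2) ^ 2 / 2 = (c + b ^ 2 / 8) * ε ^ 2 by ring, abs_mul,
        abs_of_pos (pow_pos hε0 2)]
    rw [e] at g2
    refine g2.trans (le_of_eq ?_)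
    ring
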